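/- Let A be a monomial k-algebra such that no two distinct circuits of the CPS graph Γ(A) share a vertex. Then GKdim(E(A)) equals the maximal number of distinct circuits contained in any single walk of Γ(A) that begins at a vertex of 𝔊_0 (counting each circuit once regardless of multiplicity). -/

import Mathlib

/- Combinatorial model of a monomial algebra A = T(V)/I and its CPS graph Γ(A).
   Monomials of the tensor algebra on generators indexed by σ are lists over σ;
   the tensor product w ⊗ m is list concatenation w ++ m. -/

namespace CPS

/-- Monomials of the tensor algebra: words in the generators. -/
abbrev Mon (σ : Type) := List σ

/-- A monomial ideal, given by finitely many monomial generators of degree ≥ 2. -/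
structure MonIdeal (σ : Type) where
  gens : Finset (Mon σ)
  deg2 : ∀ r ∈ gens, 2 ≤ r.length

variable {σ : Type}

/-- Membership in the two-sided monomial ideal generated by `gens`. -/
def MonIdeal.Mem (I : MonIdeal σ) (m : Mon σ) : Prop :=
  ∃ a r b, r ∈ I.gens ∧ m = a ++ r ++ b

/-- 𝔄_m : the set of minimal left annihilating monomials of m
    (w ∉ I, w ⊗ m ∈ I, and no proper suffix of w left-annihilates m). -/
def Ann (I : MonIdeal σ) (m : Mon σ) : Set (Mon σ) :=
  {w | ¬ I.Mem m ∧ ¬ I.Mem w ∧ I.Mem (w ++ m) ∧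
    ∀ w' : Mon σ, w' <:+ w → w' ≠ w → ¬ I.Mem (w' ++ m)}

/-- Directed edges of the CPS graph Γ(A): m₁ → m₂ iff m₂ ∈ 𝔄_{m₁}. -/
def Edge (I : MonIdeal σ) (m₁ m₂ : Mon σ) : Prop := m₂ ∈ Ann I m₁

/-- The vertex sets 𝔊_i : 𝔊_0 = degree-1 generators, 𝔊_{i+1} = ⋃_{w ∈ 𝔊_i} 𝔄_w. -/
def Gs (I : MonIdeal σ) : ℕ → Set (Mon σ)
  | 0 => {m | m.length = 1}
  | (i+1) => ⋃ w ∈ Gs I i, Ann I w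

/-- The vertex set 𝔊 = ⋃_i 𝔊_i of the CPS graph. -/
def Vertices (I : MonIdeal σ) : Set (Mon σ) := ⋃ i, Gs I i

/-- A walk of length n in Γ(A), encoded by a function giving the vertices
    p 0, p 1, ..., p n (values beyond n are irrelevant). -/
def IsWalk (I : MonIdeal σ) (n : ℕ) (p : ℕ → Mon σ) : Prop :=
  p 0 ∈ Vertices I ∧ ∀ i < n, Edge I (p i) (p (i+1))

/-- An infinite walk in Γ(A). -/
def InfWalk (I : MonIdeal σ) (p : ℕ → Mon σ) : Prop :=
  p 0 ∈ Vertices I ∧ ∀ i, Edge I (p i) (p (i+1))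

/-- The reversed tensor product p_n ⊗ p_{n-1} ⊗ ⋯ ⊗ p_0 of the vertices of a walk. -/
def tens (n : ℕ) (p : ℕ → Mon σ) : Mon σ :=
  (((List.range (n+1)).map p).reverse).flatten

/-- Equivalence of walks of the same length n: equal reversed tensor products. -/
def WEquiv (n : ℕ) (p q : ℕ → Mon σ) : Prop := tens n p = tens n q

/-- A walk is anchored if its first vertex lies in 𝔊_0 (is a degree-1 generator). -/
def Anchored (p : ℕ → Mon σ) : Prop := (p 0).length = 1

/-- A walk is admissible if it is a walk equivalent to an anchored walk. -/
def Admissible (I : MonIdeal σ) (n : ℕ) (p : ℕ → Mon σ) : Prop :=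
  IsWalk I n p ∧ ∃ q, IsWalk I n q ∧ Anchored q ∧ WEquiv n p q

/-- The walk obtained by deleting the first i vertices. -/
def shift (p : ℕ → Mon σ) (i : ℕ) : ℕ → Mon σ := fun t => p (i + t)

end CPS

namespace CPS
/-- A circuit of length n: a closed walk whose first n vertices are distinct. -/
def IsCircuit {σ : Type} (I : MonIdeal σ) (n : ℕ) (p : ℕ → Mon σ) : Prop :=
  0 < n ∧ IsWalk I n p ∧ p n = p 0 ∧ ∀ i < n, ∀ j < n, p i = p j → i = j

/-- The set of directed edges traversed by a walk of length n. -/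
def edgeSet {σ : Type} (n : ℕ) (p : ℕ → Mon σ) : Set (Mon σ × Mon σ) :=
  {e | ∃ i < n, e = (p i, p (i+1))}

/-- Two distinct circuits of Γ(A) sharing a common vertex. -/
def TwoCircuits {σ : Type} (I : MonIdeal σ) : Prop :=
  ∃ n p m q, IsCircuit I n p ∧ IsCircuit I m q ∧
    (∃ i < n, ∃ j < m, p i = q j) ∧ edgeSet n p ≠ edgeSet m q
/-- Anchored walks of length n in Γ(A), recorded as lists of their vertices. -/
def AWalks {σ : Type} (I : MonIdeal σ) (n : ℕ) : Set (List (Mon σ)) :=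
  {l | ∃ p : ℕ → Mon σ, IsWalk I n p ∧ Anchored p ∧ l = (List.range (n+1)).map p}

/-- The number of anchored walks of length n, i.e. dim Ext_A^{n+1}(k,k). -/
noncomputable def growth {σ : Type} (I : MonIdeal σ) (n : ℕ) : ℕ :=
  Set.ncard (AWalks I n)
/-- The set of (edge sets of) circuits occurring along a walk p of length n. -/
def CircuitsIn {σ : Type} (I : MonIdeal σ) (n : ℕ) (p : ℕ → Mon σ) :
    Set (Set (Mon σ × Mon σ)) :=
  {E | ∃ m q t, IsCircuit I m q ∧ t + m ≤ n ∧
      (∀ i ≤ m, p (t + i) = q i) ∧ E = edgeSet m q}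

/-!
Let `r` be a digraph whose circuits are disjoint. A walk that enters a strongly connected component
is forced as long as it stays there, so it is determined by the times at which it leaves the
components containing a circuit, and each of these times is a choice among `O(n)`. Hence the walks
with at most `n` edges from `v` number `O(n ^ k)`, where `k` is the largest number of circuits that
can be met one after another from `v`. Conversely, if `k` circuits can be met in turn, then going
around each of them up to `M` times gives `M ^ k` walks of length `O(M)`, which are told apart by
their numbers of visits to one marked vertex on each circuit. In Γ(A) the circuits contained in a
single walk are exactly those that are met in turn, and the partial sums of `dim E(A)` count the
walks issued from the finitely many degree-1 generators.
-/

open Relation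

section Digraph

variable {α : Type*} {r : α → α → Prop} {u v w : α} {k n : ℕ}

/-- The walks with at most `n` edges starting at `v` in the digraph `r`, each encoded by the list
of its vertices after `v`. -/
def walksFrom (r : α → α → Prop) (n : ℕ) (v : α) : Set (List α) :=
  {l | (v :: l).IsChain r ∧ l.length ≤ n}

/-- The preorder of reachability made strict: `w` is reachable from `v`, without return. -/
def StrictReach (r : α → α → Prop) (v w : α) : Prop :=
  ReflTransGen r v w ∧ ¬ ReflTransGen r w v

/-- From `v` one can visit in turn `k` vertices lying on cycles, none of which is reachable from the
next one. For digraphs with disjoint circuits, this is the existence of a walk from `v` containing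
`k` circuits. -/
inductive HasCycleChain (r : α → α → Prop) : α → ℕ → Prop
  | zero (v : α) : HasCycleChain r v 0
  | single {v : α} : TransGen r v v → HasCycleChain r v 1
  | cons {v w : α} {k : ℕ} :
      TransGen r v v → StrictReach r v w → HasCycleChain r w k → HasCycleChain r v (k + 1)
  | of_reach {v w : α} {k : ℕ} : ReflTransGen r v w → HasCycleChain r w k → HasCycleChain r v k

/-- Disjointness of circuits in terms of reachability: every vertex has at most one outgoing edge
from whose end it can be reached again. -/
def UniqueReturn (r : α → α → Prop) : Prop :=
  ∀ ⦃u a b⦄, r u a → ReflTransGen r a u → r u b → ReflTransGen r b u → a = b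

theorem isChain_cons_append {l t : List α} (hl : (v :: l).IsChain r)
    (hlast : (v :: l).getLast (List.cons_ne_nil _ _) = w) (ht : (w :: t).IsChain r) :
    (v :: (l ++ t)).IsChain r := by
  refine List.IsChain.append (l₁ := v :: l) hl ht.tail fun x hx y hy => ?_
  rw [List.getLast?_eq_some_getLast (List.cons_ne_nil _ _), hlast, Option.mem_some_iff] at hx
  exact hx ▸ ht.rel_head? hy

theorem reflTransGen_of_mem_isChain {l : List α} (hl : (v :: l).IsChain r) (hu : u ∈ l) :
    ReflTransGen r v u :=
  (List.IsChain.imp (fun _ _ => ReflTransGen.single) hl).rel_cons hu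

theorem nil_mem_walksFrom : [] ∈ walksFrom r n v := ⟨.singleton v, n.zero_le⟩

theorem append_mem_walksFrom {l t : List α} (hl : (v :: l).IsChain r)
    (hlast : (v :: l).getLast (List.cons_ne_nil _ _) = w) (ht : t ∈ walksFrom r n w) :
    l ++ t ∈ walksFrom r (l.length + n) v :=
  ⟨isChain_cons_append hl hlast ht.1, by rw [List.length_append]; have := ht.2; gcongr⟩

theorem walksFrom_zero : walksFrom r 0 v = {[]} := by
  ext l
  simpa [walksFrom] using fun h => h ▸ List.IsChain.singleton v

theorem walksFrom_succ :
    walksFrom r (n + 1) v = {[]} ∪ ⋃ a ∈ {a | r v a}, List.cons a '' walksFrom r n a := by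
  ext (_ | ⟨a, l⟩)
  · simp [nil_mem_walksFrom]
  · simp [walksFrom]
    tauto

theorem walksFrom_mono {m : ℕ} (hmn : m ≤ n) : walksFrom r m v ⊆ walksFrom r n v :=
  fun _ hl => ⟨hl.1, hl.2.trans hmn⟩

theorem finite_walksFrom (hr : ∀ v, {a | r v a}.Finite) (n : ℕ) (v : α) :
    (walksFrom r n v).Finite := by
  induction n generalizing v with
  | zero => simp [walksFrom_zero]
  | succ n ih =>
    rw [walksFrom_succ]
    exact (Set.finite_singleton _).union ((hr v).biUnion fun a _ => (ih a).image _)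

theorem ncard_walksFrom_succ_le (hv : {a | r v a}.Finite) :
    (walksFrom r (n + 1) v).ncard ≤ 1 + ∑ a ∈ hv.toFinset, (walksFrom r n a).ncard := by
  rw [walksFrom_succ]
  refine (Set.ncard_union_le _ _).trans ?_
  rw [Set.ncard_singleton]
  gcongr
  calc (⋃ a ∈ {a | r v a}, List.cons a '' walksFrom r n a).ncard
      = (⋃ a ∈ hv.toFinset, List.cons a '' walksFrom r n a).ncard := by simp
    _ ≤ ∑ a ∈ hv.toFinset, (List.cons a '' walksFrom r n a).ncard :=
        Finset.set_ncard_biUnion_le _ _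
    _ = ∑ a ∈ hv.toFinset, (walksFrom r n a).ncard :=
        Finset.sum_congr rfl fun a _ => Set.ncard_image_of_injective _ List.cons_injective

/-- The number of walks from `v` with at most `n` edges is `O(n ^ k)`. -/
def GrowthAtMost (r : α → α → Prop) (v : α) (k : ℕ) : Prop :=
  ∃ c, ∀ n, (walksFrom r n v).ncard ≤ c * (n + 1) ^ k

theorem exists_forall_ncard_walksFrom_le {s : Set α} (hs : s.Finite)
    (h : ∀ a ∈ s, GrowthAtMost r a k) :
    ∃ c, ∀ a ∈ s, ∀ n, (walksFrom r n a).ncard ≤ c * (n + 1) ^ k := by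
  refine ((Filter.eventually_all_finite (l := Filter.atTop) hs).2 fun a ha => ?_).exists
  obtain ⟨c, hc⟩ := h a ha
  filter_upwards [Filter.eventually_ge_atTop c] with c' hcc' n
  exact (hc n).trans (by gcongr)

theorem growthAtMost_of_forall_succ (hv : {a | r v a}.Finite)
    (h : ∀ a, r v a → GrowthAtMost r a k) : GrowthAtMost r v k := by
  obtain ⟨c, hc⟩ := exists_forall_ncard_walksFrom_le hv h
  refine ⟨1 + hv.toFinset.card * c, fun n => ?_⟩
  cases n with
  | zero => simp [walksFrom_zero]
  | succ n =>
    have hsum : ∑ a ∈ hv.toFinset, (walksFrom r n a).ncard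
        ≤ hv.toFinset.card * (c * (n + 1) ^ k) :=
      Finset.sum_le_card_nsmul _ _ _ fun a ha => hc a (hv.mem_toFinset.1 ha) n
    have hone : 1 ≤ (n + 1) ^ k := Nat.one_le_pow _ _ n.succ_pos
    calc (walksFrom r (n + 1) v).ncard
        ≤ (n + 1) ^ k + hv.toFinset.card * (c * (n + 1) ^ k) :=
          (ncard_walksFrom_succ_le hv).trans (add_le_add hone hsum)
      _ = (1 + hv.toFinset.card * c) * (n + 1) ^ k := by ring
      _ ≤ (1 + hv.toFinset.card * c) * (n + 1 + 1) ^ k := by gcongr; omega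

open Classical in
theorem sum_ncard_walksFrom_le {s : Finset α} {T : Set α} {B c : ℕ}
    (hT : {a ∈ T | a ∈ s}.Subsingleton) (hB : ∀ a ∈ T, (walksFrom r n a).ncard ≤ B)
    (hc : ∀ a ∈ s, a ∉ T → (walksFrom r n a).ncard ≤ c) :
    ∑ a ∈ s, (walksFrom r n a).ncard ≤ B + s.card * c := by
  rw [← Finset.sum_filter_add_sum_filter_not s (· ∈ T)]
  have hcard : (s.filter (· ∈ T)).card ≤ 1 := Finset.card_le_one.2 fun a ha b hb => by
    rw [Finset.mem_filter] at ha hb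
    exact hT ⟨ha.2, ha.1⟩ ⟨hb.2, hb.1⟩
  gcongr
  · calc ∑ a ∈ s with a ∈ T, (walksFrom r n a).ncard
        ≤ (s.filter (· ∈ T)).card * B :=
          Finset.sum_le_card_nsmul _ _ _ fun a ha => hB a (Finset.mem_filter.1 ha).2
      _ ≤ B := by nlinarith
  · calc ∑ a ∈ s with a ∉ T, (walksFrom r n a).ncard
        ≤ (s.filter (· ∉ T)).card * c :=
          Finset.sum_le_card_nsmul _ _ _ fun a ha =>
            hc a (Finset.mem_filter.1 ha).1 (Finset.mem_filter.1 ha).2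
      _ ≤ s.card * c := by gcongr; exact Finset.filter_subset _ _

/- Inside `T` the walk is forced, so it is determined by the time at which it leaves `T` and by its
continuation; summing `O(n ^ k)` over the exit times raises the exponent by one. -/
theorem growthAtMost_succ_of_forced (hr : {b | ∃ a, r a b}.Finite) {T : Set α}
    (hT : ∀ u ∈ T, {a ∈ T | r u a}.Subsingleton)
    (h : ∀ u ∈ T, ∀ a ∉ T, r u a → GrowthAtMost r a k) (hv : v ∈ T) :
    GrowthAtMost r v (k + 1) := by
  have hsucc (u) : {a | r u a}.Finite := hr.subset fun a ha => ⟨u, ha⟩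
  obtain ⟨c, hc⟩ : ∃ c, ∀ a ∈ {a | a ∉ T ∧ ∃ u ∈ T, r u a}, ∀ n,
      (walksFrom r n a).ncard ≤ c * (n + 1) ^ k :=
    exists_forall_ncard_walksFrom_le (hr.subset fun a ⟨_, u, _, hua⟩ => ⟨u, hua⟩)
      fun a ⟨haT, u, huT, hua⟩ => h u huT a haT hua
  set C := 1 + hr.toFinset.card * c
  suffices ∀ n, ∀ u ∈ T, (walksFrom r n u).ncard ≤ C * (n + 1) ^ (k + 1) from
    ⟨C, fun n => this n v hv⟩
  intro n
  induction n with
  | zero => simp [walksFrom_zero, C]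
  | succ n ih =>
    intro u hu
    have hsum : ∑ a ∈ (hsucc u).toFinset, (walksFrom r n a).ncard
        ≤ C * (n + 1) ^ (k + 1) + (hsucc u).toFinset.card * (c * (n + 1) ^ k) :=
      sum_ncard_walksFrom_le (by simpa using hT u hu) ih fun a ha haT =>
        hc a ⟨haT, u, hu, by simpa using ha⟩ n
    have hcard : (hsucc u).toFinset.card ≤ hr.toFinset.card :=
      Finset.card_le_card (Set.Finite.toFinset_subset_toFinset.2 fun a ha => ⟨u, ha⟩)
    have hone : 1 ≤ (n + 1) ^ k := Nat.one_le_pow _ _ n.succ_pos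
    calc (walksFrom r (n + 1) u).ncard
        ≤ 1 + ∑ a ∈ (hsucc u).toFinset, (walksFrom r n a).ncard :=
          ncard_walksFrom_succ_le (hsucc u)
      _ ≤ (n + 1) ^ k + (C * (n + 1) ^ (k + 1) + hr.toFinset.card * (c * (n + 1) ^ k)) := by
          gcongr
          exact hsum.trans (by gcongr)
      _ = C * ((n + 1) ^ k * (n + 1 + 1)) := by simp only [C]; ring
      _ ≤ C * ((n + 1 + 1) ^ k * (n + 1 + 1)) := by gcongr; omega
      _ = C * (n + 1 + 1) ^ (k + 1) := by rw [pow_succ (n + 1 + 1)]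

theorem finite_reachable (hr : {b | ∃ a, r a b}.Finite) (v : α) :
    {w | ReflTransGen r v w}.Finite :=
  (hr.insert v).subset fun w hw => by
    obtain rfl | ⟨a, -, haw⟩ := ReflTransGen.cases_tail hw
    exacts [.inl rfl, .inr ⟨a, haw⟩]

theorem wellFounded_swap_strictReach (hr : {b | ∃ a, r a b}.Finite) :
    WellFounded fun w v => StrictReach r v w := by
  refine Subrelation.wf (fun {w v} hvw => ?_)
    (measure fun v => {w | ReflTransGen r v w}.ncard).wf
  exact Set.ncard_lt_ncard ⟨fun a => hvw.1.trans, fun hsub => hvw.2 (hsub .refl)⟩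
    (finite_reachable hr v)

theorem growthAtMost_of_forall_hasCycleChain_le (hr : {b | ∃ a, r a b}.Finite)
    (hret : UniqueReturn r) (hk : ∀ j, HasCycleChain r v j → j ≤ k) : GrowthAtMost r v k := by
  induction v using (wellFounded_swap_strictReach hr).induction generalizing k with
  | _ v ih =>
  by_cases hcyc : TransGen r v v
  · obtain ⟨k, rfl⟩ := Nat.exists_eq_add_of_le' (hk 1 (.single hcyc))
    let component : Set α := {u | ReflTransGen r v u ∧ ReflTransGen r u v}
    refine growthAtMost_succ_of_forced hr (T := component) ?_ ?_ ⟨.refl, .refl⟩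
    · rintro u ⟨hvu, -⟩ a ⟨⟨-, hav⟩, hua⟩ b ⟨⟨-, hbv⟩, hub⟩
      exact hret hua (hav.trans hvu) hub (hbv.trans hvu)
    · rintro u ⟨hvu, -⟩ a ha hua
      have hva : StrictReach r v a := ⟨hvu.tail hua, fun hav => ha ⟨hvu.tail hua, hav⟩⟩
      exact ih a hva fun j hj => Nat.le_of_succ_le_succ (hk _ (.cons hcyc hva hj))
  · refine growthAtMost_of_forall_succ (hr.subset fun a ha => ⟨v, ha⟩) fun a hva => ?_
    exact ih a ⟨.single hva, fun hav => hcyc (.head' hva hav)⟩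
      fun j hj => hk j (.of_reach (.single hva) hj)

theorem exists_isChain_of_transGen (h : TransGen r v w) :
    ∃ l, (v :: l).IsChain r ∧ (v :: l).getLast (List.cons_ne_nil _ _) = w ∧ w ∈ l := by
  obtain ⟨a, hva, haw⟩ := TransGen.head'_iff.1 h
  obtain ⟨l, hl, hlast⟩ := List.exists_isChain_cons_of_relationReflTransGen haw
  exact ⟨a :: l, .cons_cons hva hl, by simpa using hlast, hlast ▸ List.getLast_mem _⟩

theorem flatten_replicate_append_mem_walksFrom {L t : List α} (hL : (v :: L).IsChain r)
    (hlast : (v :: L).getLast (List.cons_ne_nil _ _) = v) (ht : t ∈ walksFrom r n v) (j : ℕ) :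
    (List.replicate j L).flatten ++ t ∈ walksFrom r (L.length * j + n) v := by
  induction j with
  | zero => simpa using ht
  | succ j ih =>
    rw [List.replicate_succ, List.flatten_cons, List.append_assoc,
      show L.length * (j + 1) + n = L.length + (L.length * j + n) by ring]
    exact append_mem_walksFrom hL hlast ih

open Classical in
/- Prefixing a walk by `j` rounds of a loop at `v` adds to its number of visits to `v` a positive
multiple of `j`, so that `j` can be recovered. -/
theorem exists_mul_ncard_le_ncard_walksFrom (hr : ∀ v, {a | r v a}.Finite) (hv : TransGen r v v) :
    ∃ K, ∀ (M n c : ℕ) (T : Set (List α)), T ⊆ walksFrom r n v → (∀ t ∈ T, t.count v = c) →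
      M * T.ncard ≤ (walksFrom r (K * M + n) v).ncard := by
  obtain ⟨L, hL, hlast, hvL⟩ := exists_isChain_of_transGen hv
  refine ⟨L.length, fun M n c T hT hcount => ?_⟩
  rw [show M * T.ncard = (Set.Iio M ×ˢ T).ncard by rw [Set.ncard_prod, Set.ncard_Iio_nat]]
  refine Set.ncard_le_ncard_of_injOn (fun x => (List.replicate x.1 L).flatten ++ x.2) ?_ ?_
    (finite_walksFrom hr _ v)
  · rintro ⟨j, t⟩ ⟨hj : j < M, ht⟩
    exact walksFrom_mono (by gcongr) (flatten_replicate_append_mem_walksFrom hL hlast (hT ht) j)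
  · rintro ⟨i, s⟩ ⟨-, hs⟩ ⟨j, t⟩ ⟨-, ht⟩ (heq : _ ++ s = _ ++ t)
    have hij : i * L.count v = j * L.count v := by
      simpa [List.count_flatten, hcount s hs, hcount t ht] using congrArg (List.count v) heq
    obtain rfl : i = j := Nat.eq_of_mul_eq_mul_right (List.count_pos_iff.2 hvL) hij
    rw [List.append_cancel_left heq]

theorem ncard_walksFrom_le_of_reach (hr : ∀ v, {a | r v a}.Finite) (hvw : ReflTransGen r v w) :
    ∃ K, ∀ n, (walksFrom r n w).ncard ≤ (walksFrom r (K + n) v).ncard := by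
  obtain ⟨l, hl, hlast⟩ := List.exists_isChain_cons_of_relationReflTransGen hvw
  exact ⟨l.length, fun n => Set.ncard_le_ncard_of_injOn (l ++ ·)
    (fun _ => append_mem_walksFrom hl hlast) (List.append_right_injective l).injOn
    (finite_walksFrom hr _ v)⟩

open Classical in
theorem exists_mul_ncard_walksFrom_le_of_strictReach (hr : ∀ v, {a | r v a}.Finite)
    (hv : TransGen r v v) (hvw : StrictReach r v w) :
    ∃ K, ∀ M n, M * (walksFrom r n w).ncard ≤ (walksFrom r (K * (M + 1) + n) v).ncard := by
  obtain ⟨K, hK⟩ := exists_mul_ncard_le_ncard_walksFrom hr hv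
  obtain ⟨l, hl, hlast⟩ := List.exists_isChain_cons_of_relationReflTransGen hvw.1
  refine ⟨K + l.length, fun M n => ?_⟩
  have hcount : ∀ t ∈ walksFrom r n w, (l ++ t).count v = l.count v := fun t ht => by
    rw [List.count_append, List.count_eq_zero_of_not_mem fun hvt =>
      hvw.2 (reflTransGen_of_mem_isChain ht.1 hvt), add_zero]
  calc M * (walksFrom r n w).ncard
      = M * ((l ++ ·) '' walksFrom r n w).ncard := by
        rw [Set.ncard_image_of_injective _ (List.append_right_injective l)]
    _ ≤ (walksFrom r (K * M + (l.length + n)) v).ncard :=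
        hK M _ _ _ (Set.image_subset_iff.2 fun _ => append_mem_walksFrom hl hlast)
          (Set.forall_mem_image.2 hcount)
    _ ≤ (walksFrom r ((K + l.length) * (M + 1) + n) v).ncard :=
        Set.ncard_le_ncard (walksFrom_mono (by nlinarith)) (finite_walksFrom hr _ v)

theorem HasCycleChain.exists_pow_le_ncard_walksFrom (hr : ∀ v, {a | r v a}.Finite)
    (h : HasCycleChain r v k) :
    ∃ K, ∀ M, M ^ k ≤ (walksFrom r (K * (M + 1)) v).ncard := by
  induction h with
  | zero v => exact ⟨0, fun M => by simp [walksFrom_zero]⟩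
  | @single v hv =>
    obtain ⟨K, hK⟩ := exists_mul_ncard_le_ncard_walksFrom hr hv
    refine ⟨K, fun M => ?_⟩
    calc M ^ 1 = M * ({[]} : Set (List _)).ncard := by simp
      _ ≤ (walksFrom r (K * M + K) v).ncard :=
        hK M K 0 {[]} (Set.singleton_subset_iff.2 nil_mem_walksFrom) (by simp)
  | @cons v w k hv hvw _ ih =>
    obtain ⟨K₁, hK₁⟩ := ih
    obtain ⟨K₂, hK₂⟩ := exists_mul_ncard_walksFrom_le_of_strictReach hr hv hvw
    refine ⟨K₂ + K₁, fun M => ?_⟩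
    calc M ^ (k + 1) = M * M ^ k := pow_succ' M k
      _ ≤ M * (walksFrom r (K₁ * (M + 1)) w).ncard := by gcongr; exact hK₁ M
      _ ≤ (walksFrom r (K₂ * (M + 1) + K₁ * (M + 1)) v).ncard := hK₂ M _
      _ = (walksFrom r ((K₂ + K₁) * (M + 1)) v).ncard := by rw [add_mul]
  | @of_reach v w k hvw _ ih =>
    obtain ⟨K₁, hK₁⟩ := ih
    obtain ⟨K₂, hK₂⟩ := ncard_walksFrom_le_of_reach hr hvw
    refine ⟨K₂ + K₁, fun M => (hK₁ M).trans ((hK₂ _).trans ?_)⟩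
    exact Set.ncard_le_ncard (walksFrom_mono (by nlinarith)) (finite_walksFrom hr _ v)

end Digraph

theorem le_of_forall_pow_le_mul_pow {c d e K : ℕ} (h : ∀ M, M ^ d ≤ c * (K * (M + 1) + 1) ^ e) :
    d ≤ e := by
  by_contra! hed
  set B := c * (2 * K + 1) ^ e with hB
  have hlt : B * (B + 1) ^ e < (B + 1) ^ d := calc
    B * (B + 1) ^ e < (B + 1) * (B + 1) ^ e := by gcongr; omega
    _ = (B + 1) ^ (e + 1) := (pow_succ' _ _).symm
    _ ≤ (B + 1) ^ d := by gcongr <;> omega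
  have hle : (B + 1) ^ d ≤ B * (B + 1) ^ e := calc
    (B + 1) ^ d ≤ c * (K * (B + 1 + 1) + 1) ^ e := h (B + 1)
    _ ≤ c * ((2 * K + 1) * (B + 1)) ^ e := by gcongr; nlinarith
    _ = B * (B + 1) ^ e := by rw [mul_pow, hB, mul_assoc]
  exact hle.not_gt hlt

section ListsAndSequences

variable {α : Type*} {r : α → α → Prop} {n : ℕ} {p : ℕ → α}

theorem isChain_map_range_succ :
    ((List.range (n + 1)).map p).IsChain r ↔ ∀ i < n, r (p i) (p (i + 1)) := by
  simp [List.isChain_iff_getElem]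

theorem exists_map_range_eq_cons (v : α) (l : List α) :
    ∃ p : ℕ → α, (List.range (l.length + 1)).map p = v :: l :=
  ⟨fun i => (v :: l).getD i v, List.ext_getElem (by simp) fun i _ hi => by
    simp [List.getElem?_eq_getElem hi]⟩

theorem exists_nodup_isChain_of_reflTransGen {v w : α} (h : ReflTransGen r v w) :
    ∃ l, (v :: l).IsChain r ∧ (v :: l).getLast (List.cons_ne_nil _ _) = w ∧ (v :: l).Nodup := by
  induction h using ReflTransGen.head_induction_on with
  | refl => exact ⟨[], by simp⟩
  | @head v a hva _ ih =>
    obtain ⟨l, hl, hlast, hnodup⟩ := ih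
    by_cases hv : v ∈ a :: l
    · obtain ⟨s, t, hst⟩ := List.append_of_mem hv
      refine ⟨t, hl.suffix ⟨s, hst.symm⟩, ?_, hnodup.sublist (hst ▸ List.sublist_append_right _ _)⟩
      simpa [hst] using hlast
    · exact ⟨a :: l, .cons_cons hva hl, by simpa using hlast, List.nodup_cons.2 ⟨hv, hnodup⟩⟩

theorem exists_seq_of_reflTransGen {v w : α} (h : ReflTransGen r v w) :
    ∃ (n : ℕ) (p : ℕ → α), p 0 = v ∧ p n = w ∧ (∀ i < n, r (p i) (p (i + 1))) ∧
      Set.InjOn p (Set.Iic n) := by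
  obtain ⟨l, hl, hlast, hnodup⟩ := exists_nodup_isChain_of_reflTransGen h
  obtain ⟨p, hp⟩ := exists_map_range_eq_cons v l
  simp only [← hp] at hl hlast hnodup
  refine ⟨l.length, p, ?_, by simpa using hlast, isChain_map_range_succ.1 hl, ?_⟩
  · simpa [List.range_succ_eq_map] using congrArg List.head? hp
  · intro i hi j hj
    exact List.inj_on_of_nodup_map hnodup (by simpa [Nat.lt_succ_iff] using hi)
      (by simpa [Nat.lt_succ_iff] using hj)

theorem pairwise_disjoint_image_cons (S : α → Set (List α)) :
    Pairwise (Function.onFun Disjoint fun a => List.cons a '' S a) := by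
  refine fun a b hab => Set.disjoint_left.2 ?_
  rintro _ ⟨s, -, rfl⟩ ⟨t, -, heq⟩
  exact hab (List.cons.inj heq).1.symm

end ListsAndSequences

theorem ncard_biUnion_finset {ι α : Type*} {s : Finset ι} {S : ι → Set α}
    (hfin : ∀ i ∈ s, (S i).Finite) (hdisj : Pairwise (Function.onFun Disjoint S)) :
    (⋃ i ∈ s, S i).ncard = ∑ i ∈ s, (S i).ncard := by
  rw [← finsum_mem_coe_finset, ← s.finite_toSet.ncard_biUnion hfin (hdisj.set_pairwise _)]
  simp only [Finset.mem_coe]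

section Graph

variable {σ : Type} {I : MonIdeal σ} {n : ℕ} {p : ℕ → Mon σ} {v w : Mon σ}

/-- The edge relation of Γ(A) proper: `Edge I` relates arbitrary monomials, and is restricted here
to edges whose source, hence also whose target, is a vertex of Γ(A). -/
def GraphEdge (I : MonIdeal σ) (v w : Mon σ) : Prop := v ∈ Vertices I ∧ Edge I v w

theorem mem_vertices_of_length_eq_one (hv : v.length = 1) : v ∈ Vertices I :=
  Set.mem_iUnion.2 ⟨0, hv⟩

theorem GraphEdge.target_mem_vertices (h : GraphEdge I v w) : w ∈ Vertices I := by
  obtain ⟨i, hi⟩ := Set.mem_iUnion.1 h.1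
  exact Set.mem_iUnion.2 ⟨i + 1, Set.mem_biUnion hi h.2⟩

theorem mem_vertices_of_reach (hv : v ∈ Vertices I) (h : ReflTransGen (GraphEdge I) v w) :
    w ∈ Vertices I := by
  obtain rfl | ⟨_, -, huw⟩ := ReflTransGen.cases_tail h
  exacts [hv, huw.target_mem_vertices]

theorem isWalk_iff :
    IsWalk I n p ↔ p 0 ∈ Vertices I ∧ ∀ i < n, GraphEdge I (p i) (p (i + 1)) := by
  refine ⟨fun h => ⟨h.1, fun i hi => ⟨?_, h.2 i hi⟩⟩, fun h => ⟨h.1, fun i hi => (h.2 i hi).2⟩⟩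
  induction i with
  | zero => exact h.1
  | succ i ih =>
    have hedge : GraphEdge I (p i) (p (i + 1)) := ⟨ih (by omega), h.2 i (by omega)⟩
    exact hedge.target_mem_vertices

theorem IsWalk.graphEdge (hp : IsWalk I n p) {i : ℕ} (hi : i < n) :
    GraphEdge I (p i) (p (i + 1)) :=
  (isWalk_iff.1 hp).2 i hi

theorem IsWalk.reach (hp : IsWalk I n p) {i j : ℕ} (hij : i ≤ j) (hj : j ≤ n) :
    ReflTransGen (GraphEdge I) (p i) (p j) :=
  (reflTransGen_of_succ_of_le (fun a b => GraphEdge I (p a) (p b))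
    (fun _ hk => hp.graphEdge ((Set.mem_Ico.1 hk).2.trans_le hj)) hij).lift p fun _ _ => id

theorem IsWalk.shift (hp : IsWalk I n p) {s : ℕ} (hs : s ≤ n) :
    IsWalk I (n - s) (CPS.shift p s) :=
  ⟨mem_vertices_of_reach hp.1 (hp.reach s.zero_le hs), fun i hi => hp.2 (s + i) (by omega)⟩

theorem exists_isWalk_of_reach (hv : v ∈ Vertices I) (h : ReflTransGen (GraphEdge I) v w) :
    ∃ n p, IsWalk I n p ∧ p 0 = v ∧ p n = w := by
  obtain ⟨n, p, rfl, rfl, hp, -⟩ := exists_seq_of_reflTransGen h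
  exact ⟨n, p, isWalk_iff.2 ⟨hv, hp⟩, rfl, rfl⟩

theorem exists_prefix_gen_of_mem_ann (h : w ∈ Ann I v) : ∃ g ∈ I.gens, w <+: g := by
  obtain ⟨hv, hw, ⟨a, g, b, hg, hwv⟩, hmin⟩ := h
  refine ⟨g, hg, ?_⟩
  obtain rfl : a = [] := by
    rcases a with _ | ⟨x, a⟩
    · rfl
    rcases w with _ | ⟨y, w⟩
    · exact absurd ⟨_, g, b, hg, hwv⟩ hv
    · have htail : w ++ v = a ++ g ++ b := (List.cons.inj hwv).2
      exact absurd ⟨a, g, b, hg, htail⟩ (hmin w (List.suffix_cons y w) (by simp))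
  rcases List.prefix_or_prefix_of_prefix ⟨v, hwv⟩ (List.prefix_append g b) with hwg | ⟨c, hgw⟩
  · exact hwg
  · exact absurd ⟨[], g, c, hg, hgw.symm⟩ hw

theorem finite_range_graphEdge (I : MonIdeal σ) : {w | ∃ v, GraphEdge I v w}.Finite := by
  refine (I.gens.finite_toSet.biUnion fun g _ => g.inits.finite_toSet).subset ?_
  rintro w ⟨v, -, hvw⟩
  obtain ⟨g, hg, hwg⟩ := exists_prefix_gen_of_mem_ann hvw
  exact Set.mem_biUnion hg ((List.mem_inits w g).2 hwg)

theorem finite_graphEdge (I : MonIdeal σ) (v : Mon σ) : {w | GraphEdge I v w}.Finite :=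
  (finite_range_graphEdge I).subset fun _ hw => ⟨v, hw⟩

theorem circuitsIn_zero : CircuitsIn I 0 p = ∅ :=
  Set.eq_empty_of_forall_notMem fun _ ⟨_, _, _, hq, hle, _⟩ => absurd hq.1 (by omega)

theorem edgeSet_congr {q : ℕ → Mon σ} (h : ∀ i ≤ n, p i = q i) : edgeSet n p = edgeSet n q := by
  ext e
  refine exists_congr fun i => and_congr_right fun hi => ?_
  rw [h i hi.le, h (i + 1) hi]

theorem finite_circuitsIn (I : MonIdeal σ) (n : ℕ) (p : ℕ → Mon σ) : (CircuitsIn I n p).Finite := by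
  refine (((Set.finite_Iic n).prod (Set.finite_Iic n)).image
    fun x => edgeSet x.1 (shift p x.2)).subset ?_
  rintro _ ⟨m, q, t, -, hle, hpq, rfl⟩
  exact ⟨(m, t), ⟨Set.mem_Iic.2 (by omega), Set.mem_Iic.2 (by omega)⟩, edgeSet_congr hpq⟩

theorem circuitsIn_subset {m t : ℕ} {q : ℕ → Mon σ} (hle : t + m ≤ n)
    (h : ∀ i ≤ m, p (t + i) = q i) : CircuitsIn I m q ⊆ CircuitsIn I n p := by
  rintro _ ⟨m', q', s, hq', hs, hqq', rfl⟩
  refine ⟨m', q', t + s, hq', by omega, fun i hi => ?_, rfl⟩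
  rw [add_assoc, h _ (by omega), hqq' i hi]

theorem IsCircuit.edgeSet_mem_circuitsIn (hp : IsCircuit I n p) :
    edgeSet n p ∈ CircuitsIn I n p :=
  ⟨n, p, 0, hp, by omega, fun i _ => by rw [zero_add], rfl⟩

theorem IsWalk.exists_append {m : ℕ} {q : ℕ → Mon σ} (hq : IsWalk I m q) (hp : IsWalk I n p)
    (hqp : q m = p 0) :
    ∃ g, IsWalk I (m + n) g ∧ g 0 = q 0 ∧
      CircuitsIn I m q ∪ CircuitsIn I n p ⊆ CircuitsIn I (m + n) g := by
  let g : ℕ → Mon σ := fun i => if i ≤ m then q i else p (i - m)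
  have hgq : ∀ i ≤ m, g i = q i := fun i hi => if_pos hi
  have hgp : ∀ i, g (m + i) = p i := by
    rintro (_ | i)
    · exact (hgq m le_rfl).trans hqp
    · simp [g]
  refine ⟨g, ⟨hgq 0 m.zero_le ▸ hq.1, fun i hi => ?_⟩, hgq 0 m.zero_le,
    Set.union_subset (circuitsIn_subset (t := 0) (by omega) (by simpa using hgq))
      (circuitsIn_subset le_rfl fun i _ => hgp i)⟩
  rcases lt_or_ge i m with him | hmi
  · rw [hgq i him.le, hgq (i + 1) him]
    exact hq.2 i him
  · obtain ⟨j, rfl⟩ := Nat.exists_eq_add_of_le hmi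
    rw [add_assoc, hgp j, hgp (j + 1)]
    exact hp.2 j (by omega)

theorem exists_isCircuit {a : Mon σ} (hva : GraphEdge I v a)
    (hav : ReflTransGen (GraphEdge I) a v) :
    ∃ m q, IsCircuit I m q ∧ q 0 = v ∧ q 1 = a := by
  obtain ⟨n, g, rfl, hgn, hg, hinj⟩ := exists_seq_of_reflTransGen hav
  let q : ℕ → Mon σ := fun | 0 => v | i + 1 => g i
  have hwalk : IsWalk I (n + 1) q := by
    refine ⟨hva.1, ?_⟩
    rintro (_ | i) hi
    exacts [hva.2, (hg i (by omega)).2]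
  have hne : ∀ i < n, g i ≠ v := fun i hi hgi =>
    hi.ne (hinj (Set.mem_Iic.2 hi.le) Set.self_mem_Iic (hgi.trans hgn.symm))
  refine ⟨n + 1, q, ⟨n.succ_pos, hwalk, hgn, ?_⟩, rfl, rfl⟩
  rintro (_ | i) hi (_ | j) hj hij
  · rfl
  · exact absurd hij.symm (hne j (by omega))
  · exact absurd hij (hne i (by omega))
  · exact congrArg _ (hinj (Set.mem_Iic.2 (by omega)) (Set.mem_Iic.2 (by omega)) hij)

theorem exists_isCircuit_of_transGen (hv : TransGen (GraphEdge I) v v) :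
    ∃ m q, IsCircuit I m q ∧ q 0 = v := by
  obtain ⟨a, hva, hav⟩ := TransGen.head'_iff.1 hv
  obtain ⟨m, q, hq, hq0, -⟩ := exists_isCircuit hva hav
  exact ⟨m, q, hq, hq0⟩

theorem IsCircuit.transGen (hp : IsCircuit I n p) : TransGen (GraphEdge I) (p 0) (p 0) :=
  .head' (hp.2.1.graphEdge hp.1) (hp.2.2.1 ▸ hp.2.1.reach hp.1 le_rfl)

theorem IsCircuit.reach_start (hp : IsCircuit I n p) {i : ℕ} (hi : i ≤ n) :
    ReflTransGen (GraphEdge I) (p i) (p 0) :=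
  hp.2.2.1 ▸ hp.2.1.reach hi le_rfl

theorem edgeSet_eq_of_not_twoCircuits (hdisj : ¬ TwoCircuits I) {m i j : ℕ} {q : ℕ → Mon σ}
    (hp : IsCircuit I n p) (hq : IsCircuit I m q) (hi : i < n) (hj : j < m) (hij : p i = q j) :
    edgeSet n p = edgeSet m q := by
  by_contra hne
  exact hdisj ⟨n, p, m, q, hp, hq, ⟨i, hi, j, hj, hij⟩, hne⟩

theorem uniqueReturn_of_not_twoCircuits (hdisj : ¬ TwoCircuits I) :
    UniqueReturn (GraphEdge I) := by
  intro u a b hua hau hub hbu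
  obtain ⟨m, q, hq, hq0, rfl⟩ := exists_isCircuit hua hau
  obtain ⟨m', q', hq', hq'0, rfl⟩ := exists_isCircuit hub hbu
  have hedges := edgeSet_eq_of_not_twoCircuits hdisj hq hq' hq.1 hq'.1 (hq0.trans hq'0.symm)
  obtain ⟨i, hi, hqi⟩ : (q' 0, q' 1) ∈ edgeSet m q := hedges ▸ ⟨0, hq'.1, rfl⟩
  obtain ⟨h0, h1⟩ := Prod.mk.inj hqi
  obtain rfl : i = 0 := hq.2.2.2 i hi 0 hq.1 (by rw [← h0, hq'0, hq0])
  exact h1.symm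

theorem IsCircuit.exists_eq_of_reach (hret : UniqueReturn (GraphEdge I)) (hp : IsCircuit I n p)
    (hv : ReflTransGen (GraphEdge I) (p 0) v) (hv' : ReflTransGen (GraphEdge I) v (p 0)) :
    ∃ i < n, p i = v := by
  induction hv with
  | refl => exact ⟨0, hp.1, rfl⟩
  | @tail u v hu huv ih =>
    obtain ⟨i, hi, rfl⟩ := ih (hv'.head huv)
    have hnext : p (i + 1) = v := hret (hp.2.1.graphEdge hi)
      ((hp.reach_start hi).trans hu) huv (hv'.trans hu)
    rcases Nat.lt_or_eq_of_le (Nat.succ_le_of_lt hi) with hlt | rfl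
    · exact ⟨i + 1, hlt, hnext⟩
    · exact ⟨0, hp.1, hp.2.2.1.symm.trans hnext⟩

theorem edgeSet_eq_of_reach (hdisj : ¬ TwoCircuits I) {m : ℕ} {q : ℕ → Mon σ}
    (hp : IsCircuit I n p) (hq : IsCircuit I m q)
    (hpq : ReflTransGen (GraphEdge I) (p 0) (q 0))
    (hqp : ReflTransGen (GraphEdge I) (q 0) (p 0)) : edgeSet n p = edgeSet m q := by
  obtain ⟨i, hi, hpi⟩ := hp.exists_eq_of_reach (uniqueReturn_of_not_twoCircuits hdisj) hpq hqp
  exact edgeSet_eq_of_not_twoCircuits hdisj hp hq hi hq.1 hpi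

theorem IsWalk.reach_of_edgeSet_mem_circuitsIn (hp : IsWalk I n p) {m : ℕ} {q : ℕ → Mon σ}
    (hm : 0 < m) (h : edgeSet m q ∈ CircuitsIn I n p) : ReflTransGen (GraphEdge I) (p 0) (q 0) := by
  obtain ⟨m', q', t, -, hle, hpq', hedges⟩ := h
  obtain ⟨i, hi, hq0⟩ : (q 0, q 1) ∈ edgeSet m' q' := hedges ▸ ⟨0, hm, rfl⟩
  rw [(Prod.mk.inj hq0).1, ← hpq' i hi.le]
  exact hp.reach (Nat.zero_le _) (by omega)

theorem HasCycleChain.exists_isWalk {k : ℕ} (h : HasCycleChain (GraphEdge I) v k)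
    (hv : v ∈ Vertices I) : ∃ n p, IsWalk I n p ∧ p 0 = v ∧ k ≤ (CircuitsIn I n p).ncard := by
  induction h with
  | zero v => exact ⟨0, fun _ => v, ⟨hv, by simp⟩, rfl, Nat.zero_le _⟩
  | single hcyc =>
    obtain ⟨m, q, hq, hq0⟩ := exists_isCircuit_of_transGen hcyc
    exact ⟨m, q, hq.2.1, hq0,
      (Set.ncard_pos (finite_circuitsIn I m q)).2 ⟨_, hq.edgeSet_mem_circuitsIn⟩⟩
  | cons hcyc hvw _ ih =>
    obtain ⟨m, q, hq, rfl⟩ := exists_isCircuit_of_transGen hcyc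
    obtain ⟨n, p, hp, rfl, hcard⟩ := ih (mem_vertices_of_reach hv hvw.1)
    obtain ⟨l, g, hg, hg0, hgl⟩ := exists_isWalk_of_reach hv hvw.1
    obtain ⟨g', hg', hg'0, hsub'⟩ := hg.exists_append hp hgl
    obtain ⟨f, hf, hf0, hsub⟩ :=
      hq.2.1.exists_append hg' (hq.2.2.1.trans (hg0.symm.trans hg'0.symm))
    have hnew : edgeSet m q ∉ CircuitsIn I n p := fun hmem =>
      hvw.2 (hp.reach_of_edgeSet_mem_circuitsIn hq.1 hmem)
    refine ⟨_, f, hf, hf0, ?_⟩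
    calc _ ≤ (insert (edgeSet m q) (CircuitsIn I n p)).ncard := by
          rw [Set.ncard_insert_of_notMem hnew (finite_circuitsIn I n p)]
          gcongr
      _ ≤ (CircuitsIn I _ f).ncard :=
          Set.ncard_le_ncard (Set.insert_subset (hsub (.inl hq.edgeSet_mem_circuitsIn))
            fun _ hE => hsub (.inr (hsub' (.inr hE)))) (finite_circuitsIn I _ f)
  | of_reach hvw _ ih =>
    obtain ⟨n, p, hp, rfl, hcard⟩ := ih (mem_vertices_of_reach hv hvw)
    obtain ⟨l, g, hg, rfl, hgl⟩ := exists_isWalk_of_reach hv hvw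
    obtain ⟨f, hf, hf0, hsub⟩ := hg.exists_append hp hgl
    exact ⟨_, f, hf, hf0, hcard.trans (Set.ncard_le_ncard
      (Set.subset_union_right.trans hsub) (finite_circuitsIn I _ f))⟩

theorem mem_circuitsIn_cases {E : Set (Mon σ × Mon σ)} (hE : E ∈ CircuitsIn I n p) (s : ℕ) :
    E ∈ CircuitsIn I (n - s) (shift p s) ∨
      ∃ t < s, t ≤ n ∧ ∃ m q, IsCircuit I m q ∧ q 0 = p t ∧ E = edgeSet m q := by
  obtain ⟨m, q, t, hq, hle, hpq, rfl⟩ := hE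
  rcases lt_or_ge t s with hts | hst
  · exact .inr ⟨t, hts, by omega, m, q, hq, (hpq 0 m.zero_le).symm, rfl⟩
  · refine .inl ⟨m, q, t - s, hq, by omega, fun i hi => ?_, rfl⟩
    rw [← hpq i hi, shift, ← add_assoc, Nat.add_sub_cancel' hst]

theorem circuitsIn_subset_insert (hdisj : ¬ TwoCircuits I) (hp : IsWalk I n p) {m s : ℕ}
    {q : ℕ → Mon σ} (hq : IsCircuit I m q) (hq0 : q 0 = p 0)
    (hs : ∀ t < s, t ≤ n → ReflTransGen (GraphEdge I) (p t) (p 0)) :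
    CircuitsIn I n p ⊆ insert (edgeSet m q) (CircuitsIn I (n - s) (shift p s)) := by
  intro E hE
  rcases mem_circuitsIn_cases hE s with hE | ⟨t, hts, htn, m', q', hq', hq't, rfl⟩
  · exact .inr hE
  · refine .inl (edgeSet_eq_of_reach hdisj hq' hq ?_ ?_) <;> rw [hq0, hq't]
    exacts [hs t hts htn, hp.reach t.zero_le htn]

theorem ncard_circuitsIn_le_of_not_transGen (hp : ¬ TransGen (GraphEdge I) (p 0) (p 0)) :
    (CircuitsIn I n p).ncard ≤ (CircuitsIn I (n - 1) (shift p 1)).ncard := by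
  refine Set.ncard_le_ncard (fun E hE => ?_) (finite_circuitsIn I _ _)
  rcases mem_circuitsIn_cases hE 1 with hE | ⟨t, ht, -, m, q, hq, hq0, -⟩
  · exact hE
  · obtain rfl := Nat.lt_one_iff.1 ht
    exact absurd (hq0 ▸ hq.transGen) hp

theorem IsWalk.exists_hasCycleChain (hdisj : ¬ TwoCircuits I) (hp : IsWalk I n p) :
    ∃ k, (CircuitsIn I n p).ncard ≤ k ∧ HasCycleChain (GraphEdge I) (p 0) k := by
  induction n using Nat.strong_induction_on generalizing p with
  | _ n ih =>
  by_cases hcyc : TransGen (GraphEdge I) (p 0) (p 0)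
  · obtain ⟨m, q, hq, hq0⟩ := exists_isCircuit_of_transGen hcyc
    have hncard {s : ℕ} (hs : ∀ t < s, t ≤ n → ReflTransGen (GraphEdge I) (p t) (p 0)) :
        (CircuitsIn I n p).ncard ≤ (CircuitsIn I (n - s) (CPS.shift p s)).ncard + 1 :=
      (Set.ncard_le_ncard (circuitsIn_subset_insert hdisj hp hq hq0 hs)
        ((finite_circuitsIn I _ _).insert _)).trans (Set.ncard_insert_le _ _)
    by_cases hexit : ∃ s, s ≤ n ∧ ¬ ReflTransGen (GraphEdge I) (p s) (p 0)
    · classical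
      obtain ⟨hsn, hs⟩ := Nat.find_spec hexit
      have hpos : 0 < Nat.find hexit := Nat.pos_of_ne_zero fun h0 => hs (by rw [h0])
      obtain ⟨k, hk, hchain⟩ := ih _ (by omega) (hp.shift hsn)
      refine ⟨k + 1, (hncard fun t ht htn => ?_).trans (by gcongr),
        .cons hcyc ⟨hp.reach (Nat.zero_le _) hsn, hs⟩ hchain⟩
      exact not_not.1 fun hnot => Nat.find_min hexit ht ⟨htn, hnot⟩
    · push Not at hexit
      refine ⟨1, ?_, .single hcyc⟩
      simpa [circuitsIn_zero] using hncard (s := n) fun t _ => hexit t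
  · have hle := ncard_circuitsIn_le_of_not_transGen (n := n) hcyc
    rcases n with _ | n
    · exact ⟨0, by simp [circuitsIn_zero], .zero _⟩
    · obtain ⟨k, hk, hchain⟩ := ih n n.lt_succ_self (hp.shift (s := 1) (by omega))
      exact ⟨k, hle.trans hk, .of_reach (hp.reach zero_le_one (by omega)) hchain⟩

theorem mem_aWalks_iff {l : List (Mon σ)} :
    l ∈ AWalks I n ↔
      ∃ v t, v.length = 1 ∧ (v :: t).IsChain (GraphEdge I) ∧ t.length = n ∧ v :: t = l := by
  constructor
  · rintro ⟨p, hp, hanch, rfl⟩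
    have hchain := isChain_map_range_succ.2 (isWalk_iff.1 hp).2
    rw [List.range_succ_eq_map, List.map_cons] at hchain ⊢
    exact ⟨p 0, _, hanch, hchain, by simp, rfl⟩
  · rintro ⟨v, t, hv, hchain, rfl, rfl⟩
    obtain ⟨p, hpt⟩ := exists_map_range_eq_cons v t
    obtain rfl : p 0 = v := by simpa [List.range_succ_eq_map] using congrArg List.head? hpt
    rw [← hpt] at hchain
    exact ⟨p, isWalk_iff.2 ⟨mem_vertices_of_length_eq_one hv, isChain_map_range_succ.1 hchain⟩,
      hv, hpt.symm⟩

theorem biUnion_aWalks_eq [Finite σ] (I : MonIdeal σ) (N : ℕ) :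
    ⋃ n ∈ Finset.range (N + 1), AWalks I n =
      ⋃ v ∈ (List.finite_length_eq σ 1).toFinset,
        List.cons v '' walksFrom (GraphEdge I) N v := by
  ext l
  simp only [Set.mem_iUnion, mem_aWalks_iff, Finset.mem_range, Set.Finite.mem_toFinset,
    Set.mem_ofPred_eq, Set.mem_image, walksFrom, exists_prop, Nat.lt_succ_iff]
  constructor
  · rintro ⟨n, hn, v, t, hv, hchain, rfl, rfl⟩
    exact ⟨v, hv, t, ⟨hchain, hn⟩, rfl⟩
  · rintro ⟨v, hv, t, ⟨hchain, hn⟩, rfl⟩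
    exact ⟨_, hn, v, t, hv, hchain, rfl, rfl⟩

theorem pairwise_disjoint_aWalks : Pairwise (Function.onFun Disjoint (AWalks I)) := by
  refine fun m n hmn => Set.disjoint_left.2 fun l hm hn => hmn ?_
  obtain ⟨_, t, -, -, rfl, rfl⟩ := mem_aWalks_iff.1 hm
  obtain ⟨_, t', -, -, rfl, heq⟩ := mem_aWalks_iff.1 hn
  rw [(List.cons.inj heq).2]

theorem sum_growth_eq [Finite σ] (I : MonIdeal σ) (N : ℕ) :
    ∑ n ∈ Finset.range (N + 1), growth I n =
      ∑ v ∈ (List.finite_length_eq σ 1).toFinset, (walksFrom (GraphEdge I) N v).ncard := by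
  have hfin (v) : (List.cons v '' walksFrom (GraphEdge I) N v).Finite :=
    (finite_walksFrom (finite_graphEdge I) N v).image _
  have hfinUnion : (⋃ n ∈ Finset.range (N + 1), AWalks I n).Finite := by
    rw [biUnion_aWalks_eq]
    exact (Finset.finite_toSet _).biUnion fun v _ => hfin v
  calc ∑ n ∈ Finset.range (N + 1), growth I n
      = (⋃ n ∈ Finset.range (N + 1), AWalks I n).ncard :=
        (ncard_biUnion_finset (fun n hn => hfinUnion.subset (Set.subset_biUnion_of_mem hn))
          pairwise_disjoint_aWalks).symm
    _ = (⋃ v ∈ (List.finite_length_eq σ 1).toFinset,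
          List.cons v '' walksFrom (GraphEdge I) N v).ncard := by rw [biUnion_aWalks_eq]
    _ = ∑ v ∈ (List.finite_length_eq σ 1).toFinset,
          (List.cons v '' walksFrom (GraphEdge I) N v).ncard :=
        ncard_biUnion_finset (fun v _ => hfin v) (pairwise_disjoint_image_cons _)
    _ = ∑ v ∈ (List.finite_length_eq σ 1).toFinset, (walksFrom (GraphEdge I) N v).ncard :=
        Finset.sum_congr rfl fun v _ => Set.ncard_image_of_injective _ List.cons_injective

theorem exists_sum_growth_le [Finite σ] {d : ℕ}
    (h : ∀ v : Mon σ, v.length = 1 → GrowthAtMost (GraphEdge I) v d) :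
    ∃ c, 0 < c ∧ ∀ n, ∑ i ∈ Finset.range (n + 1), growth I i ≤ c * (n + 1) ^ d := by
  obtain ⟨c, hc⟩ := exists_forall_ncard_walksFrom_le (List.finite_length_eq σ 1) h
  set generators := (List.finite_length_eq σ 1).toFinset
  refine ⟨generators.card * c + 1, Nat.succ_pos _, fun n => ?_⟩
  calc ∑ i ∈ Finset.range (n + 1), growth I i
      = ∑ v ∈ generators, (walksFrom (GraphEdge I) n v).ncard := sum_growth_eq I n
    _ ≤ generators.card * (c * (n + 1) ^ d) :=
        Finset.sum_le_card_nsmul _ _ _ fun v hv => hc v ((Set.Finite.mem_toFinset _).1 hv) n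
    _ ≤ (generators.card * c + 1) * (n + 1) ^ d := by nlinarith [Nat.zero_le ((n + 1) ^ d)]

theorem HasCycleChain.le_of_sum_growth_le [Finite σ] {c e k : ℕ}
    (h : HasCycleChain (GraphEdge I) v k) (hv : v.length = 1)
    (hc : ∀ n, ∑ i ∈ Finset.range (n + 1), growth I i ≤ c * (n + 1) ^ e) : k ≤ e := by
  obtain ⟨K, hK⟩ := h.exists_pow_le_ncard_walksFrom (finite_graphEdge I)
  refine le_of_forall_pow_le_mul_pow (c := c) (K := K) fun M => ?_
  calc M ^ k ≤ (walksFrom (GraphEdge I) (K * (M + 1)) v).ncard := hK M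
    _ ≤ ∑ u ∈ (List.finite_length_eq σ 1).toFinset,
          (walksFrom (GraphEdge I) (K * (M + 1)) u).ncard :=
        Finset.single_le_sum (f := fun u => (walksFrom (GraphEdge I) (K * (M + 1)) u).ncard)
          (fun _ _ => Nat.zero_le _) ((Set.Finite.mem_toFinset _).2 hv)
    _ = ∑ i ∈ Finset.range (K * (M + 1) + 1), growth I i := (sum_growth_eq I _).symm
    _ ≤ c * (K * (M + 1) + 1) ^ e := hc _

end Graph

/-- Corollary 2.9(3): if no two distinct circuits of Γ(A) share a vertex, then
    GKdim E(A) equals the maximal number of distinct circuits contained in an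
    anchored walk (GKdim being the least polynomial-growth exponent of the
    dimension partial sums of E(A)). -/
theorem stmt11 {σ : Type} [Finite σ] (I : MonIdeal σ)
    (hdisj : ¬ TwoCircuits I) (d : ℕ)
    (hd : IsGreatest {m : ℕ | ∃ n : ℕ, ∃ p : ℕ → Mon σ, IsWalk I n p ∧ Anchored p ∧
        (CircuitsIn I n p).ncard = m} d) :
    IsLeast {e : ℕ | ∃ c : ℕ, 0 < c ∧ ∀ n : ℕ,
        (Finset.range (n+1)).sum (growth I) ≤ c * (n+1) ^ e} d := by
  constructor
  · refine exists_sum_growth_le fun v hv =>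
      growthAtMost_of_forall_hasCycleChain_le (finite_range_graphEdge I)
        (uniqueReturn_of_not_twoCircuits hdisj) fun k hk => ?_
    obtain ⟨n, p, hp, rfl, hcard⟩ := hk.exists_isWalk (mem_vertices_of_length_eq_one hv)
    exact hcard.trans (hd.2 ⟨n, p, hp, hv, rfl⟩)
  · rintro e ⟨c, -, hc⟩
    obtain ⟨n, p, hp, hanch, rfl⟩ := hd.1
    obtain ⟨k, hk, hchain⟩ := hp.exists_hasCycleChain hdisj
    exact hk.trans (hchain.le_of_sum_growth_le hanch hc)

end CPS
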